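/- (Extended validity of the RBBG formula, Pfaff-transformed branch.) Let p*_ℓ := (√(3+2√3) − 1)/2. For every real p with −1/2 < p < p*_ℓ, one has ₂F₁(1/3, 2/3; 1; β(p)) = γ_ℓ(p) · ₂F₁(1/2, 1/2; 1; α_ℓ(p)). (For such p one has −1 < α_ℓ(p) < 1 and 0 ≤ β(p) < 1, so both hypergeometric series converge absolutely.) -/

import Mathlib

open Real

/-- Gauss hypergeometric function ₂F₁ defined via its power series
    (the tsum; converges absolutely for |z| < 1). -/
noncomputable def hyp2F1 (a b c z : ℝ) : ℝ :=
  ∑' n : ℕ, ((ascPochhammer ℝ n).eval a * (ascPochhammer ℝ n).eval b /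
      (ascPochhammer ℝ n).eval c) * z ^ n / (Nat.factorial n)

noncomputable def β (p : ℝ) : ℝ := 27 * p ^ 2 * (1 + p) ^ 2 / (4 * (1 + p + p ^ 2) ^ 3)

noncomputable def αℓ (p : ℝ) : ℝ := -(p ^ 3 * (2 + p)) / ((1 - p ^ 2) * (1 + p) ^ 2)

noncomputable def γℓ (p : ℝ) : ℝ := (1 + p + p ^ 2) / ((1 + p) * Real.sqrt (1 - p ^ 2))

noncomputable def pStarℓ : ℝ := (Real.sqrt (3 + 2 * Real.sqrt 3) - 1) / 2

/-!
Both sides solve one Sturm–Liouville equation `(w y')' = q y` on `(-1/2, p*_ℓ)`. Indeed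
`F = ₂F₁(a, b; 1; ·)` with `a + b = 1` satisfies `(z (1 - z) F')' = a b F`; substituting `z = β(x)`
gives the weight `w = β (1 - β) / β'`, and substituting `z = αℓ(x)` and then multiplying by `γℓ`
gives the same equation, because `w γℓ² αℓ' = (3/2) αℓ (1 - αℓ)` and `γℓ` itself solves a
Sturm–Liouville equation with weight `w`. Since `w` vanishes at `0`, where both sides equal `1`, the
weighted Wronskian of the two sides vanishes identically, so their quotient is constant.
-/

open Set Metric

section PowerSeries

theorem mem_eball_zero_one_iff_norm_lt_one {E : Type*} [SeminormedAddGroup E] {z : E} :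
    z ∈ eball (0 : E) 1 ↔ ‖z‖ < 1 := by
  simp [← ofReal_norm]

theorem hasFPowerSeriesOnBall_deriv_ofScalars {𝕜 : Type*} [NontriviallyNormedField 𝕜]
    [CompleteSpace 𝕜] {k : ℕ → 𝕜} {f : 𝕜 → 𝕜} {z : 𝕜} {r : ENNReal}
    (hf : HasFPowerSeriesOnBall f (.ofScalars 𝕜 k) z r) :
    HasFPowerSeriesOnBall (deriv f) (.ofScalars 𝕜 fun n ↦ (n + 1) * k (n + 1)) z r := by
  convert! (ContinuousLinearMap.apply 𝕜 𝕜 (1 : 𝕜)).comp_hasFPowerSeriesOnBall hf.fderiv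
  ext n
  simp

theorem hasSum_mul_pow_of_hasFPowerSeriesOnBall_ofScalars {𝕜 : Type*} [NontriviallyNormedField 𝕜]
    {k : ℕ → 𝕜} {f : 𝕜 → 𝕜} {z : 𝕜} {r : ENNReal}
    (hf : HasFPowerSeriesOnBall f (.ofScalars 𝕜 k) 0 r) (hz : z ∈ eball 0 r) :
    HasSum (fun n ↦ k n * z ^ n) (f z) := by
  simpa [mul_comm] using hf.hasSum hz

theorem hasSum_mul_pow_of_hasSum_succ_mul_pow {R : Type*} [CommRing R] [TopologicalSpace R]
    [IsTopologicalRing R] {k : ℕ → R} {z S : R} (hk : k 0 = 0)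
    (h : HasSum (fun n ↦ k (n + 1) * z ^ n) S) : HasSum (fun n ↦ k n * z ^ n) (z * S) := by
  have hshift : HasSum (fun n ↦ k (n + 1) * z ^ (n + 1)) (z * S) :=
    (h.mul_left z).congr_fun fun n ↦ by ring
  simpa [hk] using (hasSum_nat_add_iff (f := fun n ↦ k n * z ^ n) 1).mp hshift

end PowerSeries

section Hypergeometric

theorem hyp2F1_eq_ordinaryHypergeometric (a b c : ℝ) : hyp2F1 a b c = ₂F₁ a b c := by
  rw [ordinaryHypergeometric_eq_tsum]
  funext z
  refine tsum_congr fun n ↦ ?_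
  rw [smul_eq_mul]
  ring

variable {𝕜 : Type*} [RCLike 𝕜]

theorem one_le_radius_ordinaryHypergeometricSeries (a b c : 𝕜) :
    1 ≤ (ordinaryHypergeometricSeries 𝕜 a b c).radius := by
  by_cases h : ∀ k : ℕ, ↑k ≠ -a ∧ ↑k ≠ -b ∧ ↑k ≠ -c
  · exact (ordinaryHypergeometricSeries_radius_eq_one 𝕜 a b c h).ge
  · push Not at h
    obtain ⟨k, hk⟩ := h
    suffices (ordinaryHypergeometricSeries 𝕜 a b c).radius = ⊤ by simp [this]
    refine FormalMultilinearSeries.radius_eq_top_of_forall_image_add_eq_zero _ (1 + k) fun n ↦ ?_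
    exact ordinaryHypergeometricSeries_eq_zero_of_neg_nat a b c (k := k) (by tauto) (by lia)

theorem hasFPowerSeriesOnBall_ordinaryHypergeometric (a b c : 𝕜) :
    HasFPowerSeriesOnBall (₂F₁ a b c : 𝕜 → 𝕜) (ordinaryHypergeometricSeries 𝕜 a b c) 0 1 := by
  have hr := one_le_radius_ordinaryHypergeometricSeries a b c
  exact (FormalMultilinearSeries.hasFPowerSeriesOnBall _ (one_pos.trans_le hr)).mono one_pos hr

theorem analyticAt_ordinaryHypergeometric (a b c : 𝕜) {z : 𝕜} (hz : ‖z‖ < 1) :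
    AnalyticAt 𝕜 (₂F₁ a b c) z :=
  (hasFPowerSeriesOnBall_ordinaryHypergeometric a b c).analyticAt_of_mem
    (mem_eball_zero_one_iff_norm_lt_one.mpr hz)

theorem ordinaryHypergeometricCoefficient_succ (a b : 𝕜) {c : 𝕜} {n : ℕ} (hc : c + n ≠ 0) :
    (n + 1) * (c + n) * ordinaryHypergeometricCoefficient a b c (n + 1) =
      (a + n) * (b + n) * ordinaryHypergeometricCoefficient a b c n := by
  have hn : (n + 1 : 𝕜) ≠ 0 := by exact_mod_cast n.succ_ne_zero
  simp only [ordinaryHypergeometricCoefficient, ascPochhammer_succ_eval, Nat.factorial_succ]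
  push_cast
  field

theorem ordinaryHypergeometric_differential_equation (a b : 𝕜) {c z : 𝕜}
    (hc : ∀ n : ℕ, c + n ≠ 0) (hz : ‖z‖ < 1) :
    z * (1 - z) * deriv (deriv (₂F₁ a b c)) z + (c - (a + b + 1) * z) * deriv (₂F₁ a b c) z =
      a * b * ₂F₁ a b c z := by
  have hz := mem_eball_zero_one_iff_norm_lt_one.mpr hz
  set F : 𝕜 → 𝕜 := ₂F₁ a b c
  set k := ordinaryHypergeometricCoefficient a b c
  have hF : HasFPowerSeriesOnBall F (.ofScalars 𝕜 k) 0 1 :=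
    hasFPowerSeriesOnBall_ordinaryHypergeometric a b c
  have hF' := hasFPowerSeriesOnBall_deriv_ofScalars hF
  have hsum : HasSum (fun n ↦ k n * z ^ n) (F z) :=
    hasSum_mul_pow_of_hasFPowerSeriesOnBall_ofScalars hF hz
  have hsum' : HasSum (fun n : ℕ ↦ (n + 1) * k (n + 1) * z ^ n) (deriv F z) :=
    hasSum_mul_pow_of_hasFPowerSeriesOnBall_ofScalars hF' hz
  have hsum'' := hasSum_mul_pow_of_hasFPowerSeriesOnBall_ofScalars
    (hasFPowerSeriesOnBall_deriv_ofScalars hF') hz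
  have hzF' : HasSum (fun n : ℕ ↦ n * k n * z ^ n) (z * deriv F z) :=
    hasSum_mul_pow_of_hasSum_succ_mul_pow (by simp) (by simpa using hsum')
  have hzF'' : HasSum (fun n : ℕ ↦ n * ((n + 1) * k (n + 1)) * z ^ n)
      (z * deriv (deriv F) z) :=
    hasSum_mul_pow_of_hasSum_succ_mul_pow (by simp) (by simpa using hsum'')
  have hzzF'' : HasSum (fun n : ℕ ↦ n * (n - 1) * k n * z ^ n)
      (z * (z * deriv (deriv F) z)) :=
    hasSum_mul_pow_of_hasSum_succ_mul_pow (by simp)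
      (by convert! hzF'' using 2 with n; push_cast; ring)
  have hlhs := (hzF''.sub hzzF'').add ((hsum'.mul_left c).sub (hzF'.mul_left (a + b + 1)))
  have hcoeff (n : ℕ) := ordinaryHypergeometricCoefficient_succ a b (hc n)
  linear_combination hlhs.unique ((hsum.mul_left (a * b)).congr_fun fun n ↦ by
    linear_combination z ^ n * hcoeff n)

theorem ordinaryHypergeometric_pos {a b c z : ℝ} (ha : 0 < a) (hb : 0 < b) (hc : 0 < c)
    (hz₀ : 0 ≤ z) (hz₁ : z < 1) : 0 < ₂F₁ a b c z := by
  have hcoeff (n : ℕ) : 0 < ordinaryHypergeometricCoefficient a b c n := by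
    have := ascPochhammer_pos n a ha
    have := ascPochhammer_pos n b hb
    have := ascPochhammer_pos n c hc
    positivity
  have hsum : HasSum (fun n ↦ ordinaryHypergeometricCoefficient a b c n * z ^ n) (₂F₁ a b c z) :=
    hasSum_mul_pow_of_hasFPowerSeriesOnBall_ofScalars
      (hasFPowerSeriesOnBall_ordinaryHypergeometric a b c)
      (mem_eball_zero_one_iff_norm_lt_one.mpr (by rwa [Real.norm_of_nonneg hz₀]))
  rw [← hsum.tsum_eq]
  exact hsum.summable.tsum_pos (fun n ↦ mul_nonneg (hcoeff n).le (pow_nonneg hz₀ n)) 0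
    (by simp)

end Hypergeometric

section SturmLiouville

/-- `IsSturmLiouvilleSolution p q s y` says that `y` solves `(p y')' = q y` on `s`. Only `p y'` is
required to be differentiable, so that `y` need not be twice differentiable where `p` vanishes. -/
structure IsSturmLiouvilleSolution (p q : ℝ → ℝ) (s : Set ℝ) (y : ℝ → ℝ) : Prop where
  differentiableAt : ∀ x ∈ s, DifferentiableAt ℝ y x
  hasDerivAt : ∀ x ∈ s, HasDerivAt (fun t ↦ p t * deriv y t) (q x * y x) x

theorem isSturmLiouvilleSolution_ordinaryHypergeometric {a b : ℝ} (hab : a + b = 1) :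
    IsSturmLiouvilleSolution (fun z ↦ z * (1 - z)) (fun _ ↦ a * b) (ball 0 1) (₂F₁ a b 1) where
  differentiableAt z hz :=
    (analyticAt_ordinaryHypergeometric a b 1 (mem_ball_zero_iff.mp hz)).differentiableAt
  hasDerivAt z hz := by
    have hz := mem_ball_zero_iff.mp hz
    have hF' := (analyticAt_ordinaryHypergeometric a b 1 hz).deriv.differentiableAt.hasDerivAt
    have hode := ordinaryHypergeometric_differential_equation a b (c := 1)
      (fun n ↦ by positivity) hz
    refine (((hasDerivAt_id' z).mul ((hasDerivAt_id' z).const_sub 1)).mul hF').congr_deriv ?_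
    simp only [Pi.mul_apply]
    linear_combination hode + z * deriv (₂F₁ a b 1) z * hab

namespace IsSturmLiouvilleSolution

variable {p q P Q q₀ q₁ u v y g φ : ℝ → ℝ} {s t : Set ℝ} {c x₀ : ℝ}

theorem congr (hy : IsSturmLiouvilleSolution p q s y) (hq : EqOn q q₀ s) :
    IsSturmLiouvilleSolution p q₀ s y where
  differentiableAt := hy.differentiableAt
  hasDerivAt x hx := hq hx ▸ hy.hasDerivAt x hx

theorem mono (hy : IsSturmLiouvilleSolution p q s y) (h : t ⊆ s) :
    IsSturmLiouvilleSolution p q t y where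
  differentiableAt x hx := hy.differentiableAt x (h hx)
  hasDerivAt x hx := hy.hasDerivAt x (h hx)

theorem comp (hy : IsSturmLiouvilleSolution P Q t y) (hs : IsOpen s) (hφ : MapsTo φ s t)
    (hφ' : ∀ x ∈ s, DifferentiableAt ℝ φ x) (hp : ∀ x ∈ s, p x * deriv φ x = c * P (φ x)) :
    IsSturmLiouvilleSolution p (fun x ↦ c * Q (φ x) * deriv φ x) s (y ∘ φ) where
  differentiableAt x hx := (hy.differentiableAt _ (hφ hx)).comp x (hφ' x hx)
  hasDerivAt x hx := by
    have hquasi : ∀ r ∈ s, p r * deriv (y ∘ φ) r = c * (P (φ r) * deriv y (φ r)) := fun r hr ↦ by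
      rw [deriv_comp r (hy.differentiableAt _ (hφ hr)) (hφ' r hr)]
      linear_combination deriv y (φ r) * hp r hr
    have hderiv := ((hy.hasDerivAt _ (hφ hx)).comp x (hφ' x hx).hasDerivAt).const_mul c
    refine (hderiv.congr_of_eventuallyEq ?_).congr_deriv (by simp only [Function.comp]; ring)
    filter_upwards [hs.mem_nhds hx] with r hr using hquasi r hr

theorem mul (hg : IsSturmLiouvilleSolution p q₀ s g) (hs : IsOpen s) (hg₀ : ∀ x ∈ s, g x ≠ 0)
    (hy : IsSturmLiouvilleSolution (fun x ↦ p x * g x ^ 2) q₁ s y) :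
    IsSturmLiouvilleSolution p (fun x ↦ q₀ x + q₁ x / g x ^ 2) s (fun x ↦ g x * y x) where
  differentiableAt x hx := (hg.differentiableAt x hx).mul (hy.differentiableAt x hx)
  hasDerivAt x hx := by
    have hquasi : ∀ r ∈ s, p r * deriv (fun x ↦ g x * y x) r =
        p r * deriv g r * y r + p r * g r ^ 2 * deriv y r / g r := fun r hr ↦ by
      rw [deriv_fun_mul (hg.differentiableAt r hr) (hy.differentiableAt r hr)]
      have := hg₀ r hr
      field
    have hgx := (hg.differentiableAt x hx).hasDerivAt
    have hyx := (hy.differentiableAt x hx).hasDerivAt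
    have hderiv := ((hg.hasDerivAt x hx).mul hyx).add ((hy.hasDerivAt x hx).div hgx (hg₀ x hx))
    refine (hderiv.congr_of_eventuallyEq ?_).congr_deriv ?_
    · filter_upwards [hs.mem_nhds hx] with r hr using hquasi r hr
    · have := hg₀ x hx
      field

theorem hasDerivAt_wronskian (hu : IsSturmLiouvilleSolution p q s u)
    (hv : IsSturmLiouvilleSolution p q s v) {x : ℝ} (hx : x ∈ s) :
    HasDerivAt (fun t ↦ u t * (p t * deriv v t) - v t * (p t * deriv u t)) 0 x := by
  have hux := (hu.differentiableAt x hx).hasDerivAt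
  have hvx := (hv.differentiableAt x hx).hasDerivAt
  exact ((hux.mul (hv.hasDerivAt x hx)).sub (hvx.mul (hu.hasDerivAt x hx))).congr_deriv (by ring)

theorem wronskian_eq_zero (hu : IsSturmLiouvilleSolution p q s u)
    (hv : IsSturmLiouvilleSolution p q s v) (hs : IsOpen s) (hs' : IsPreconnected s)
    (hx₀ : x₀ ∈ s) (hp₀ : p x₀ = 0) {x : ℝ} (hx : x ∈ s) :
    u x * (p x * deriv v x) - v x * (p x * deriv u x) = 0 := by
  have hW {t : ℝ} (ht : t ∈ s) := hu.hasDerivAt_wronskian hv ht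
  rw [hs.is_const_of_deriv_eq_zero hs'
    (fun t ht ↦ (hW ht).differentiableAt.differentiableWithinAt) (fun t ht ↦ (hW ht).deriv) hx hx₀]
  simp [hp₀]

theorem hasDerivAt_div_zero (hu : IsSturmLiouvilleSolution p q s u)
    (hv : IsSturmLiouvilleSolution p q s v) (hs : IsOpen s) (hs' : IsPreconnected s)
    (hx₀ : x₀ ∈ s) (hp₀ : p x₀ = 0) {x : ℝ} (hx : x ∈ s) (hux : u x ≠ 0) (hpx : p x ≠ 0) :
    HasDerivAt (fun t ↦ v t / u t) 0 x := by
  refine ((hv.differentiableAt x hx).hasDerivAt.div (hu.differentiableAt x hx).hasDerivAt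
    hux).congr_deriv ?_
  have hnum : deriv v x * u x - v x * deriv u x = 0 := mul_left_cancel₀ hpx <| by
    linear_combination hu.wronskian_eq_zero hv hs hs' hx₀ hp₀ hx
  rw [hnum, zero_div]

theorem eqOn (hu : IsSturmLiouvilleSolution p q s u) (hv : IsSturmLiouvilleSolution p q s v)
    (hs : IsOpen s) (hs' : IsPreconnected s) (hp : {x ∈ s | p x = 0}.Countable)
    (hx₀ : x₀ ∈ s) (hp₀ : p x₀ = 0) (hu₀ : ∀ x ∈ s, u x ≠ 0) (huv : u x₀ = v x₀) :
    EqOn u v s := by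
  intro x hx
  have hsub : uIcc x₀ x ⊆ s := hs'.ordConnected.uIcc_subset hx₀ hx
  -- Where `p` vanishes the Wronskian says nothing about `(v / u)'`, so the fundamental theorem of
  -- calculus is applied off a countable set.
  have hint := MeasureTheory.integral_eq_of_hasDerivAt_off_countable (a := x₀) (b := x)
    (fun t ↦ v t / u t) (fun _ ↦ 0) hp
    (fun t ht ↦ ((hv.differentiableAt t (hsub ht)).continuousAt.div
      (hu.differentiableAt t (hsub ht)).continuousAt (hu₀ t (hsub ht))).continuousWithinAt)
    (fun t ⟨ht, htp⟩ ↦ have hts := hsub (Ioo_subset_Icc_self ht)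
      hu.hasDerivAt_div_zero hv hs hs' hx₀ hp₀ hts (hu₀ t hts) fun h ↦ htp ⟨hts, h⟩)
    intervalIntegrable_const
  have hquot : v x / u x = 1 := by
    simpa [← huv, hu₀ x₀ hx₀, sub_eq_zero] using hint.symm
  exact ((div_eq_one_iff_eq (hu₀ x hx)).mp hquot).symm

end IsSturmLiouvilleSolution

end SturmLiouville

section Parametrization

variable {x : ℝ}

theorem one_add_self_add_sq_pos (x : ℝ) : 0 < 1 + x + x ^ 2 := by
  nlinarith [sq_nonneg (2 * x + 1)]

theorem pStarℓ_pos : 0 < pStarℓ := by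
  have : 1 < √(3 + 2 * √3) := Real.lt_sqrt_of_sq_lt (by linarith [Real.sqrt_nonneg 3])
  unfold pStarℓ
  linarith

theorem pStarℓ_lt_one : pStarℓ < 1 := by
  have h₃ : √3 < 3 := by rw [Real.sqrt_lt' (by norm_num)]; norm_num
  have : √(3 + 2 * √3) < 3 := by rw [Real.sqrt_lt' (by norm_num)]; linarith
  unfold pStarℓ
  linarith

theorem β_nonneg (x : ℝ) : 0 ≤ β x := by
  have := one_add_self_add_sq_pos x
  unfold β
  positivity

theorem one_sub_β (x : ℝ) :
    1 - β x = ((1 - x) * (2 + x) * (1 + 2 * x)) ^ 2 / (4 * (1 + x + x ^ 2) ^ 3) := by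
  have := (one_add_self_add_sq_pos x).ne'
  unfold β
  field_simp
  ring

theorem β_lt_one (hx : x ∈ Ioo (-(1 / 2)) 1) : β x < 1 := by
  obtain ⟨hx₀, hx₁⟩ := hx
  have := one_add_self_add_sq_pos x
  have : 0 < 1 - x := by linarith
  have : 0 < 2 + x := by linarith
  have : 0 < 1 + 2 * x := by linarith
  rw [← sub_pos, one_sub_β]
  positivity

theorem hasDerivAt_β (x : ℝ) :
    HasDerivAt β
      (27 * x * (1 + x) * (1 - x) * (2 + x) * (1 + 2 * x) / (4 * (1 + x + x ^ 2) ^ 4)) x := by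
  have hS := (one_add_self_add_sq_pos x).ne'
  have hx := hasDerivAt_id' x
  refine ((((hx.pow 2).const_mul 27).mul ((hx.const_add 1).pow 2)).div
    ((((hx.const_add 1).add (hx.pow 2)).pow 3).const_mul 4)
    (by simp only [Pi.add_apply, Pi.pow_apply]; positivity)).congr_deriv ?_
  simp only [Nat.cast_ofNat, Nat.add_one_sub_one, pow_one, mul_one, Pi.pow_apply, Pi.add_apply,
    Pi.mul_apply]
  field_simp
  ring

theorem one_sub_αℓ (hx : x ∈ Ioo (-1) 1) :
    1 - αℓ x = (1 + 2 * x) / ((1 - x) * (1 + x) ^ 3) := by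
  have : 1 - x ≠ 0 := by linarith [hx.2]
  have : 1 + x ≠ 0 := by linarith [hx.1]
  rw [αℓ, show 1 - x ^ 2 = (1 - x) * (1 + x) by ring]
  field

theorem one_add_αℓ (hx : x ∈ Ioo (-1) 1) :
    1 + αℓ x = (1 + 2 * x - 4 * x ^ 3 - 2 * x ^ 4) / ((1 - x) * (1 + x) ^ 3) := by
  have : 1 - x ≠ 0 := by linarith [hx.2]
  have : 1 + x ≠ 0 := by linarith [hx.1]
  rw [αℓ, show 1 - x ^ 2 = (1 - x) * (1 + x) by ring]
  field

theorem one_add_two_mul_sub_pos_of_mem_Ioo_pStarℓ (hx : x ∈ Ioo (-(1 / 2)) pStarℓ) :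
    0 < 1 + 2 * x - 4 * x ^ 3 - 2 * x ^ 4 := by
  obtain ⟨hx₀, hx₁⟩ := hx
  have h₃ : √3 ^ 2 = 3 := Real.sq_sqrt (by norm_num)
  have : 3 / 2 < √3 := Real.lt_sqrt_of_sq_lt (by norm_num)
  have hsq : (2 * x + 1) ^ 2 < 3 + 2 * √3 := by
    rw [← Real.lt_sqrt (by linarith)]
    unfold pStarℓ at hx₁
    linarith
  -- With `t = x + x ^ 2`, twice the quartic is `(1 + √3 - 2 t) (2 t + √3 - 1)`.
  have hfactor₁ : 0 < 1 + √3 - 2 * (x + x ^ 2) := by linarith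
  have hfactor₂ : 0 < 2 * (x + x ^ 2) + √3 - 1 := by nlinarith [sq_nonneg (2 * x + 1)]
  linear_combination (1 / 2) * mul_pos hfactor₁ hfactor₂ + (1 / 2) * h₃

theorem abs_αℓ_lt_one (hx : x ∈ Ioo (-(1 / 2)) pStarℓ) : |αℓ x| < 1 := by
  have hnum := one_add_two_mul_sub_pos_of_mem_Ioo_pStarℓ hx
  obtain ⟨hx₀, hx₁⟩ := hx
  have hx₁ := hx₁.trans pStarℓ_lt_one
  have hx : x ∈ Ioo (-1) 1 := ⟨by linarith, hx₁⟩
  have : 0 < 1 - x := by linarith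
  have : 0 < 1 + x := by linarith
  have : 0 < 1 + 2 * x := by linarith
  have h₁ : 0 < 1 - αℓ x := by rw [one_sub_αℓ hx]; positivity
  have h₂ : 0 < 1 + αℓ x := by rw [one_add_αℓ hx]; positivity
  exact abs_lt.mpr ⟨by linarith, by linarith⟩

theorem hasDerivAt_αℓ (hx : x ∈ Ioo (-1) 1) :
    HasDerivAt αℓ (-6 * x ^ 2 / ((1 - x) ^ 2 * (1 + x) ^ 4)) x := by
  have h₁ : 1 - x ≠ 0 := by linarith [hx.2]
  have h₂ : 1 + x ≠ 0 := by linarith [hx.1]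
  have hfac : 1 - x ^ 2 = (1 - x) * (1 + x) := by ring
  have hx := hasDerivAt_id' x
  refine (((hx.pow 3).mul (hx.const_add 2)).neg.div
    (((hx.pow 2).const_sub 1).mul ((hx.const_add 1).pow 2))
    (by simp only [Pi.mul_apply, Pi.pow_apply, hfac]; positivity)).congr_deriv ?_
  simp only [Nat.cast_ofNat, Nat.add_one_sub_one, mul_one, Pi.pow_apply, neg_add_rev, Pi.mul_apply,
    hfac, Pi.neg_apply, pow_one, neg_mul, sub_neg_eq_add]
  field_simp
  ring

theorem γℓ_pos (hx : x ∈ Ioo (-1) 1) : 0 < γℓ x := by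
  have := one_add_self_add_sq_pos x
  have : 0 < 1 - x ^ 2 := by nlinarith [hx.1, hx.2]
  have : 0 < 1 + x := by linarith [hx.1]
  unfold γℓ
  positivity

theorem γℓ_sq (hx : x ∈ Ioo (-1) 1) :
    γℓ x ^ 2 = (1 + x + x ^ 2) ^ 2 / ((1 - x) * (1 + x) ^ 3) := by
  have hnonneg : 0 ≤ 1 - x ^ 2 := by nlinarith [hx.1, hx.2]
  rw [γℓ, div_pow, mul_pow, Real.sq_sqrt hnonneg]
  congr 1
  ring

theorem hasDerivAt_γℓ (hx : x ∈ Ioo (-1) 1) :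
    HasDerivAt γℓ (3 * x / ((1 + x + x ^ 2) * (1 - x ^ 2)) * γℓ x) x := by
  have hS := (one_add_self_add_sq_pos x).ne'
  have h₁ : 1 + x ≠ 0 := by linarith [hx.1]
  have h₂ : 0 < 1 - x ^ 2 := by nlinarith [hx.1, hx.2]
  have hsq : √(1 - x ^ 2) ^ 2 = 1 - x ^ 2 := Real.sq_sqrt h₂.le
  have hx := hasDerivAt_id' x
  refine (((hx.const_add 1).add (hx.pow 2)).div
    ((hx.const_add 1).mul (((hx.pow 2).const_sub 1).sqrt h₂.ne'))
    (by simp only [Pi.mul_apply, Pi.pow_apply]; positivity)).congr_deriv ?_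
  simp only [Nat.cast_ofNat, Nat.add_one_sub_one, pow_one, mul_one, Pi.pow_apply, Pi.mul_apply,
    Pi.add_apply, one_mul, γℓ]
  field_simp
  rw [hsq]
  ring

/-- The weight `w = β (1 - β) / β'` of the Sturm–Liouville equation `(w y')' = q y` solved by both
sides of the RBBG formula, with the common factors of numerator and denominator cancelled so that
its zero at `0` is visible. -/
noncomputable def rbbgWeight (x : ℝ) : ℝ :=
  x * (2 + x) * (1 + 2 * x) * (1 - x) * (1 + x) / (4 * (1 + x + x ^ 2) ^ 2)

theorem rbbgWeight_zero : rbbgWeight 0 = 0 := by simp [rbbgWeight]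

theorem eq_zero_of_rbbgWeight_eq_zero (hx : x ∈ Ioo (-(1 / 2)) 1) (h : rbbgWeight x = 0) :
    x = 0 := by
  have := (one_add_self_add_sq_pos x).ne'
  have h₁ : 2 + x ≠ 0 := by linarith [hx.1]
  have h₂ : 1 + 2 * x ≠ 0 := by linarith [hx.1]
  have h₃ : 1 - x ≠ 0 := by linarith [hx.2]
  have h₄ : 1 + x ≠ 0 := by linarith [hx.1]
  simpa [rbbgWeight, h₁, h₂, h₃, h₄, this] using h

theorem rbbgWeight_mul_deriv_β (x : ℝ) : rbbgWeight x * deriv β x = β x * (1 - β x) := by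
  have := (one_add_self_add_sq_pos x).ne'
  rw [(hasDerivAt_β x).deriv, one_sub_β, rbbgWeight, β]
  field

theorem rbbgWeight_mul_γℓ_sq_mul_deriv_αℓ (hx : x ∈ Ioo (-1) 1) :
    rbbgWeight x * γℓ x ^ 2 * deriv αℓ x = 3 / 2 * (αℓ x * (1 - αℓ x)) := by
  have := (one_add_self_add_sq_pos x).ne'
  have : 1 - x ≠ 0 := by linarith [hx.2]
  have : 1 + x ≠ 0 := by linarith [hx.1]
  rw [(hasDerivAt_αℓ hx).deriv, γℓ_sq hx, one_sub_αℓ hx, rbbgWeight, αℓ,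
    show 1 - x ^ 2 = (1 - x) * (1 + x) by ring]
  field

theorem rbbgWeight_mul_deriv_γℓ (hx : x ∈ Ioo (-1) 1) :
    rbbgWeight x * deriv γℓ x =
      3 * x ^ 2 * (2 + x) * (1 + 2 * x) / (4 * (1 + x + x ^ 2) ^ 3) * γℓ x := by
  have := (one_add_self_add_sq_pos x).ne'
  have : 1 - x ≠ 0 := by linarith [hx.2]
  have : 1 + x ≠ 0 := by linarith [hx.1]
  rw [(hasDerivAt_γℓ hx).deriv, rbbgWeight, show 1 - x ^ 2 = (1 - x) * (1 + x) by ring]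
  field

-- The subtracted term is the contribution of `₂F₁ (1/2) (1/2) 1 ∘ αℓ` that
-- `IsSturmLiouvilleSolution.mul` adds back.
theorem isSturmLiouvilleSolution_γℓ :
    IsSturmLiouvilleSolution rbbgWeight
      (fun x ↦ 2 / 9 * deriv β x - 3 / 8 * deriv αℓ x / γℓ x ^ 2) (Ioo (-1) 1) γℓ where
  differentiableAt x hx := (hasDerivAt_γℓ hx).differentiableAt
  hasDerivAt x hx := by
    have hS := (one_add_self_add_sq_pos x).ne'
    have h₁ : 1 - x ≠ 0 := by linarith [hx.2]
    have h₂ : 1 + x ≠ 0 := by linarith [hx.1]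
    have hid := hasDerivAt_id' x
    have hfactor := (((((hid.pow 2).const_mul 3).mul (hid.const_add 2)).mul
      ((hid.const_mul 2).const_add 1)).div ((((hid.const_add 1).add (hid.pow 2)).pow 3).const_mul 4)
      (by simp only [Pi.add_apply, Pi.pow_apply]; positivity))
    refine ((hfactor.mul (hasDerivAt_γℓ hx)).congr_of_eventuallyEq ?_).congr_deriv ?_
    · filter_upwards [isOpen_Ioo.mem_nhds hx] with t ht using rbbgWeight_mul_deriv_γℓ ht
    · rw [(hasDerivAt_β x).deriv, (hasDerivAt_αℓ hx).deriv, γℓ_sq hx,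
        show 1 - x ^ 2 = (1 - x) * (1 + x) by ring]
      simp only [Nat.cast_ofNat, Nat.add_one_sub_one, pow_one, mul_one, Pi.pow_apply, Pi.mul_apply,
        Pi.add_apply, Pi.div_apply, neg_mul]
      field_simp
      ring

end Parametrization

section RBBG

theorem isSturmLiouvilleSolution_ordinaryHypergeometric_comp_β :
    IsSturmLiouvilleSolution rbbgWeight (fun x ↦ 2 / 9 * deriv β x) (Ioo (-(1 / 2)) 1)
      (₂F₁ (1 / 3 : ℝ) (2 / 3) 1 ∘ β) := by
  refine ((isSturmLiouvilleSolution_ordinaryHypergeometric (by norm_num)).comp (c := 1) isOpen_Ioo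
    (fun x hx ↦ ?_) (fun x _ ↦ (hasDerivAt_β x).differentiableAt)
    (fun x _ ↦ by rw [rbbgWeight_mul_deriv_β, one_mul])).congr fun x _ ↦ by norm_num
  rw [mem_ball_zero_iff, Real.norm_of_nonneg (β_nonneg x)]
  exact β_lt_one hx

theorem isSturmLiouvilleSolution_γℓ_mul_ordinaryHypergeometric_comp_αℓ :
    IsSturmLiouvilleSolution rbbgWeight (fun x ↦ 2 / 9 * deriv β x) (Ioo (-(1 / 2)) pStarℓ)
      (fun x ↦ γℓ x * (₂F₁ (1 / 2 : ℝ) (1 / 2) 1 ∘ αℓ) x) := by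
  have hsub : Ioo (-(1 / 2)) pStarℓ ⊆ Ioo (-1) 1 :=
    Ioo_subset_Ioo (by norm_num) pStarℓ_lt_one.le
  have hcomp : IsSturmLiouvilleSolution (fun x ↦ rbbgWeight x * γℓ x ^ 2)
      (fun x ↦ 3 / 2 * (1 / 2 * (1 / 2)) * deriv αℓ x) (Ioo (-(1 / 2)) pStarℓ)
      (₂F₁ (1 / 2 : ℝ) (1 / 2) 1 ∘ αℓ) :=
    (isSturmLiouvilleSolution_ordinaryHypergeometric (by norm_num)).comp isOpen_Ioo
      (fun x hx ↦ by simpa using abs_αℓ_lt_one hx)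
      (fun x hx ↦ (hasDerivAt_αℓ (hsub hx)).differentiableAt)
      (fun x hx ↦ rbbgWeight_mul_γℓ_sq_mul_deriv_αℓ (hsub hx))
  exact ((isSturmLiouvilleSolution_γℓ.mono hsub).mul isOpen_Ioo
    (fun x hx ↦ (γℓ_pos (hsub hx)).ne') hcomp).congr fun x _ ↦ by ring

end RBBG

/-- Extended validity of the RBBG formula, Pfaff-transformed branch. -/
theorem RBBG_extended_Pfaff (p : ℝ) (hp0 : -(1/2) < p) (hp1 : p < pStarℓ) :
    hyp2F1 (1/3) (2/3) 1 (β p) = γℓ p * hyp2F1 (1/2) (1/2) 1 (αℓ p) := by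
  have hsub : Ioo (-(1 / 2)) pStarℓ ⊆ Ioo (-(1 / 2)) 1 := Ioo_subset_Ioo_right pStarℓ_lt_one.le
  have hne : ∀ x ∈ Ioo (-(1 / 2)) pStarℓ, (₂F₁ (1 / 3 : ℝ) (2 / 3) 1 ∘ β) x ≠ 0 := fun x hx ↦
    (ordinaryHypergeometric_pos (by norm_num) (by norm_num) one_pos (β_nonneg x)
      (β_lt_one (hsub hx))).ne'
  have hzeros : {x ∈ Ioo (-(1 / 2)) pStarℓ | rbbgWeight x = 0}.Countable :=
    (countable_singleton 0).mono fun x hx ↦ eq_zero_of_rbbgWeight_eq_zero (hsub hx.1) hx.2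
  have hinit : (₂F₁ (1 / 3 : ℝ) (2 / 3) 1 ∘ β) 0 = γℓ 0 * (₂F₁ (1 / 2 : ℝ) (1 / 2) 1 ∘ αℓ) 0 := by
    simp [β, αℓ, γℓ]
  rw [hyp2F1_eq_ordinaryHypergeometric, hyp2F1_eq_ordinaryHypergeometric]
  exact (isSturmLiouvilleSolution_ordinaryHypergeometric_comp_β.mono hsub).eqOn
    isSturmLiouvilleSolution_γℓ_mul_ordinaryHypergeometric_comp_αℓ isOpen_Ioo isPreconnected_Ioo
    hzeros ⟨by norm_num, pStarℓ_pos⟩ rbbgWeight_zero hne hinit ⟨hp0, hp1⟩
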